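/- Let X be a finite type, p a probability mass function on X, f : X → ℝ, and k ≥ 1 an integer, and define g(ξ) = ∑_x p(x)·(E_ξ[f] − f(x))² + (1/k)·Var_ξ(f). Assume there is no x ∈ X with f(x) = E_p[f], and assume there exists a probability mass function q with Var_q(f) = 0 and (E_q[f] − E_p[f])² < (1/k)·Var_{p'}(f) for every probability mass function p' with E_{p'}[f] = E_p[f]. Then no probability mass function ξ with E_ξ[f] = E_p[f] minimizes g over the set of all probability mass functions on X; equivalently, every minimizer ξ* of g satisfies E_{ξ*}[f] ≠ E_p[f]. -/

import Mathlib

open Finset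

/-- `IsPMF μ` says `μ` is a probability mass function on the finite type `X`. -/
def IsPMF {X : Type*} [Fintype X] (μ : X → ℝ) : Prop :=
  (∀ x, 0 ≤ μ x) ∧ ∑ x, μ x = 1

/-- Expectation of `f` under the probability mass function `μ`. -/
noncomputable def pmfExp {X : Type*} [Fintype X] (μ f : X → ℝ) : ℝ :=
  ∑ x, μ x * f x

/-- Variance of `f` under the probability mass function `μ`. -/
noncomputable def pmfVar {X : Type*} [Fintype X] (μ f : X → ℝ) : ℝ :=
  ∑ x, μ x * (f x - pmfExp μ f) ^ 2

/-- `g(ξ) = ∑_x p(x)·(E_ξ[f] − f(x))² + (1/k)·Var_ξ(f)`. -/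
noncomputable def gLoss {X : Type*} [Fintype X] (p f : X → ℝ) (k : ℕ) (ξ : X → ℝ) : ℝ :=
  (∑ x, p x * (pmfExp ξ f - f x) ^ 2) + (1 / (k : ℝ)) * pmfVar ξ f

/-- Bias-variance decomposition of the mean squared deviation of `f` from a constant. -/
theorem sum_mul_sub_sq_eq_sq_add_pmfVar {X : Type*} [Fintype X] {p : X → ℝ} (hp : IsPMF p)
    (f : X → ℝ) (c : ℝ) :
    ∑ x, p x * (c - f x) ^ 2 = (c - pmfExp p f) ^ 2 + pmfVar p f := by
  have expand (d : ℝ) :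
      ∑ x, p x * (d - f x) ^ 2 = d ^ 2 - 2 * d * pmfExp p f + ∑ x, p x * f x ^ 2 := by
    calc ∑ x, p x * (d - f x) ^ 2
        = ∑ x, (d ^ 2 * p x - 2 * d * (p x * f x) + p x * f x ^ 2) :=
          sum_congr rfl fun x _ => by ring
      _ = _ := by
          rw [sum_add_distrib, sum_sub_distrib, ← mul_sum, ← mul_sum, hp.2, mul_one, pmfExp]
  have hvar : pmfVar p f = ∑ x, p x * (pmfExp p f - f x) ^ 2 :=
    sum_congr rfl fun x _ => by ring
  rw [hvar, expand, expand]
  ring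

/-- If no `x` has `f(x) = E_p[f]`, and some zero-variance `q` satisfies
`(E_q[f] − E_p[f])² < (1/k)·Var_{p'}(f)` for every mean-matching `p'`, then every
minimizer `ξ*` of `g` over all probability mass functions satisfies `E_{ξ*}[f] ≠ E_p[f]`. -/
theorem gLoss_minimizer_not_mean_matching {X : Type*} [Fintype X]
    (p f : X → ℝ) (hp : IsPMF p) (k : ℕ) (hk : 1 ≤ k)
    (hno : ∀ x : X, f x ≠ pmfExp p f)
    (hq : ∃ q : X → ℝ, IsPMF q ∧ pmfVar q f = 0 ∧
      ∀ p' : X → ℝ, IsPMF p' → pmfExp p' f = pmfExp p f →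
        (pmfExp q f - pmfExp p f) ^ 2 < (1 / (k : ℝ)) * pmfVar p' f) :
    ∀ ξ : X → ℝ, IsPMF ξ →
      (∀ ξ' : X → ℝ, IsPMF ξ' → gLoss p f k ξ ≤ gLoss p f k ξ') →
      pmfExp ξ f ≠ pmfExp p f := by
  obtain ⟨q, hq_pmf, hq_var, hq_lt⟩ := hq
  intro ξ hξ hmin hmean
  have hle := hmin q hq_pmf
  have hlt := hq_lt ξ hξ hmean
  simp only [gLoss, sum_mul_sub_sq_eq_sq_add_pmfVar hp, hq_var, hmean] at hle
  linarith
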